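/- Let δ>0 and s ∈ (0,1). The right limit lim_{r↓s} d/dr G_δ(s,r) (taken over r ∈ (s,1)) and the left limit lim_{r↑s} d/dr G_δ(s,r) (taken over r ∈ (0,s)) both exist, and their difference equals −1: lim_{r↓s} d/dr G_δ(s,r) − lim_{r↑s} d/dr G_δ(s,r) = −1. -/

import Mathlib

open MeasureTheory Real Filter

/-- Ascending Pochhammer symbol `(a)_k = a(a+1)⋯(a+k-1)`. -/
noncomputable def poch (a : ℝ) (k : ℕ) : ℝ := ∏ i ∈ Finset.range k, (a + i)

/-- Gauss hypergeometric function `₂F₁(a,b,c,z) = ∑ (a)_k (b)_k / (k! (c)_k) z^k`. -/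
noncomputable def hyp2F1 (a b c z : ℝ) : ℝ :=
  ∑' k : ℕ, (poch a k * poch b k) / ((Nat.factorial k : ℝ) * poch c k) * z ^ k

/-- `K(δ) = 2 Γ((δ+1)/2)² / Γ(δ/2)²`. -/
noncomputable def Kcoef (δ : ℝ) : ℝ :=
  2 * Real.Gamma ((δ + 1) / 2) ^ 2 / Real.Gamma (δ / 2) ^ 2

/-- Two-point kernel `G_δ(s,r)`, equal to the second moment `E^δ[X_s X_r]` of a
δ-dimensional Bessel bridge from 0 to 0 over [0,1]. -/
noncomputable def twoPt (δ s r : ℝ) : ℝ :=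
  if s < r then
    Kcoef δ * (r - s) ^ (δ / 2 + 1) * (s * (1 - r)) ^ ((1 : ℝ) / 2) *
      (r * (1 - s)) ^ (-((δ + 1) / 2)) *
      hyp2F1 ((δ + 1) / 2) ((δ + 1) / 2) (δ / 2) (s * (1 - r) / (r * (1 - s)))
  else
    Kcoef δ * (s - r) ^ (δ / 2 + 1) * (r * (1 - s)) ^ ((1 : ℝ) / 2) *
      (s * (1 - r)) ^ (-((δ + 1) / 2)) *
      hyp2F1 ((δ + 1) / 2) ((δ + 1) / 2) (δ / 2) (r * (1 - s) / (s * (1 - r)))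

/-- Coefficient `D(s,r)`. -/
noncomputable def Dcoef (s r : ℝ) : ℝ :=
  if s < r then (1 - s) / ((r - s) * (1 - r)) else s / (r * (s - r))

/-- Coefficient `C_k = Γ(k+(δ+1)/2)/(Γ(δ/2) Γ(k+δ/2) k!)`. -/
noncomputable def Ccoef (δ : ℝ) (k : ℕ) : ℝ :=
  Real.Gamma ((k : ℝ) + (δ + 1) / 2) /
    (Real.Gamma (δ / 2) * Real.Gamma ((k : ℝ) + δ / 2) * (Nat.factorial k : ℝ))

/-- Coefficient `f_k(s,r)`. -/
noncomputable def fcoef (s r : ℝ) (k : ℕ) : ℝ :=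
  if s < r then (2 * (r - s)) ^ ((1 : ℝ) / 2 - (k : ℝ)) * (s / r) ^ ((k : ℝ) + 1 / 2)
  else (2 * (s - r)) ^ ((1 : ℝ) / 2 - (k : ℝ)) * ((1 - s) / (1 - r)) ^ ((k : ℝ) + 1 / 2)

/-- `Σ^δ_{r,s}(b) = Σ^δ_r(X_s | b)`, the density-weighted conditional expectation of a
δ-dimensional Bessel bridge. -/
noncomputable def SigmaRS (δ r s b : ℝ) : ℝ :=
  ((2 : ℝ) ^ (δ / 2 - 1) * (r * (1 - r)) ^ (δ / 2))⁻¹ *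
    Real.exp (-(Dcoef s r) * b ^ 2 / 2) *
    ∑' k : ℕ, Ccoef δ k * fcoef s r k * b ^ (2 * k)


theorem poch_succ' (a : ℝ) (k : ℕ) : poch a (k+1) = poch a k * (a + k) := by
  simp [poch, Finset.prod_range_succ]

theorem poch_succ_left (a : ℝ) (k : ℕ) : poch a (k+1) = a * poch (a+1) k := by
  simp only [poch, Finset.prod_range_succ']
  rw [mul_comm]
  congr 1
  · simp
  · apply Finset.prod_congr rfl
    intro i _
    push_cast; ring

theorem poch_ne (a : ℝ) (h : ∀ k : ℕ, a + k ≠ 0) (k : ℕ) : poch a k ≠ 0 :=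
  Finset.prod_ne_zero_iff.2 fun i _ => h i

theorem poch_pos' {a : ℝ} (h : 0 < a) (k : ℕ) : 0 < poch a k :=
  Finset.prod_pos fun i _ => by positivity

noncomputable def hcf (a b c : ℝ) (k : ℕ) : ℝ :=
  (poch a k * poch b k) / ((Nat.factorial k : ℝ) * poch c k)

theorem hcf_rec (a b : ℝ) {c : ℝ} (hc : 0 < c) (k : ℕ) :
    hcf a b c (k+1) * ((k+1) * (c + k)) = hcf a b c k * ((a+k)*(b+k)) := by
  have h1 : (Nat.factorial k : ℝ) ≠ 0 := by positivity
  have h2 := (poch_pos' hc k).ne'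
  have h3 : c + k ≠ 0 := by positivity
  have h4 : (k + 1 : ℝ) ≠ 0 := by positivity
  simp only [hcf, poch_succ', Nat.factorial_succ]
  push_cast
  field_simp

theorem hcf_shift (a b : ℝ) {c : ℝ} (hc : 0 < c) (k : ℕ) :
    (k+1) * hcf a b c (k+1) = a * b / c * hcf (a+1) (b+1) (c+1) k := by
  have h1 : (Nat.factorial k : ℝ) ≠ 0 := by positivity
  have h2 := (poch_pos' (show 0 < c + 1 by linarith) k).ne'
  have h4 : (k + 1 : ℝ) ≠ 0 := by positivity
  simp only [hcf, poch_succ_left, Nat.factorial_succ]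
  push_cast
  field_simp

theorem hcf_summable {a b c : ℝ} (ha : ∀ k : ℕ, a + k ≠ 0) (hb : ∀ k : ℕ, b + k ≠ 0)
    (hc : 0 < c) {z : ℝ} (hz : |z| < 1) : Summable fun k => hcf a b c k * z ^ k := by
  by_cases hz0 : z = 0
  · apply summable_of_ne_finset_zero (s := {0})
    intro k hk
    have : k ≠ 0 := by simpa using hk
    simp [hz0, this]
  have hne : ∀ k, hcf a b c k ≠ 0 := fun k => by
    have h1 : (Nat.factorial k : ℝ) ≠ 0 := by positivity
    exact div_ne_zero (mul_ne_zero (poch_ne a ha k) (poch_ne b hb k))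
      (mul_ne_zero h1 (poch_pos' hc k).ne')
  refine summable_of_ratio_test_tendsto_lt_one (l := |z|) hz
    (Eventually.of_forall fun k => mul_ne_zero (hne k) (pow_ne_zero _ hz0)) ?_
  have key : ∀ x : ℝ, Tendsto (fun k : ℕ => (x + k) / (1 + k : ℝ)) atTop (nhds 1) := by
    intro x
    have h := (tendsto_one_div_add_atTop_nhds_zero_nat (𝕜 := ℝ)).const_mul (x - 1)
    have h2 := h.const_add 1
    simp only [mul_zero, add_zero] at h2
    refine h2.congr fun k => ?_
    have h4 : (k + 1 : ℝ) ≠ 0 := by positivity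
    have h5 : (1 + k : ℝ) ≠ 0 := by positivity
    field_simp
    ring
  have h := (((key a).mul (key b)).div (key c) one_ne_zero).abs.mul_const |z|
  simp only [mul_one, div_one, abs_one, one_mul] at h
  refine h.congr fun k => ?_
  have e := hcf_rec a b hc k
  have h3 : c + k ≠ 0 := by positivity
  have h4 : (k + 1 : ℝ) ≠ 0 := by positivity
  have h5 : (1 + k : ℝ) ≠ 0 := by positivity
  have e2 : hcf a b c (k+1) = hcf a b c k * ((a+k)*(b+k)) / ((k+1) * (c + k)) := by
    rw [eq_div_iff (mul_ne_zero h4 h3), e]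
  rw [Real.norm_eq_abs, Real.norm_eq_abs, ← abs_div, ← abs_mul]
  congr 1
  rw [e2]
  have := hne k
  simp only [Pi.div_apply]
  field_simp
  ring

theorem hcf_hasSum {a b c : ℝ} (ha : ∀ k : ℕ, a + k ≠ 0) (hb : ∀ k : ℕ, b + k ≠ 0)
    (hc : 0 < c) {z : ℝ} (hz : |z| < 1) :
    HasSum (fun k => hcf a b c k * z ^ k) (hyp2F1 a b c z) :=
  (hcf_summable ha hb hc hz).hasSum

theorem shift_ne {a : ℝ} (ha : ∀ k : ℕ, a + k ≠ 0) : ∀ k : ℕ, a + 1 + k ≠ 0 := by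
  intro k
  have := ha (k+1)
  push_cast at this
  rwa [add_assoc, add_comm 1 (k:ℝ)]

theorem hcf_hasSum1 {a b c : ℝ} (ha : ∀ k : ℕ, a + k ≠ 0) (hb : ∀ k : ℕ, b + k ≠ 0)
    (hc : 0 < c) {z : ℝ} (hz : |z| < 1) :
    HasSum (fun k : ℕ => (k+1) * hcf a b c (k+1) * z ^ k)
      (a * b / c * hyp2F1 (a+1) (b+1) (c+1) z) := by
  have := (hcf_hasSum (shift_ne ha) (shift_ne hb) (show 0 < c + 1 by linarith) hz).mul_left
    (a*b/c)
  refine this.congr_fun ?_ 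
  intro k
  rw [hcf_shift a b hc]; ring

theorem hyp_hasDerivAt {a b c : ℝ} (ha : ∀ k : ℕ, a + k ≠ 0) (hb : ∀ k : ℕ, b + k ≠ 0)
    (hc : 0 < c) {z : ℝ} (hz : |z| < 1) :
    HasDerivAt (hyp2F1 a b c) (a * b / c * hyp2F1 (a+1) (b+1) (c+1) z) z := by
  obtain ⟨r, hr1, hr2⟩ := exists_between hz
  have hr0 : 0 < r := lt_of_le_of_lt (abs_nonneg z) hr1
  have hr : |r| < 1 := by rwa [abs_of_pos hr0]
  have hu : Summable fun k : ℕ => ‖(k:ℝ) * hcf a b c k * r ^ (k-1)‖ := by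
    rw [← summable_nat_add_iff 1]
    have := (hcf_hasSum1 ha hb hc hr).summable.norm
    simpa using this
  have hz' : z ∈ Metric.ball (0:ℝ) r := by simpa using hr1
  have key := hasDerivAt_tsum_of_isPreconnected (𝕜 := ℝ) (y₀ := 0) (y := z)
    (g := fun (k:ℕ) z => hcf a b c k * z ^ k)
    (g' := fun (k:ℕ) z => k * hcf a b c k * z ^ (k-1)) hu (Metric.isOpen_ball)
    ((convex_ball (0:ℝ) r).isPreconnected) ?_ ?_ (by simpa using hr0)
    (hcf_summable ha hb hc (by simp)) hz'
  · have e : (∑' k : ℕ, (k:ℝ) * hcf a b c k * z ^ (k-1)) =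
        a * b / c * hyp2F1 (a+1) (b+1) (c+1) z := by
      have h1 := hcf_hasSum1 ha hb hc hz
      have h2 : HasSum (fun k : ℕ => (k:ℝ) * hcf a b c k * z ^ (k-1))
         (a * b / c * hyp2F1 (a+1) (b+1) (c+1) z) := by
        rw [← hasSum_nat_add_iff' 1]
        simpa using h1
      exact h2.tsum_eq
    rw [e] at key
    exact key
  · intro k y _
    have := (hasDerivAt_pow k y).const_mul (hcf a b c k)
    have e : (k:ℝ) * hcf a b c k * y ^ (k-1) = hcf a b c k * (k * y ^ (k-1)) := by ring
    simp only [e]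
    exact this
  · intro k y hy
    have hy' : |y| < r := by simpa using hy
    simp only [norm_mul, norm_pow, Real.norm_eq_abs]
    rw [abs_of_pos hr0]
    gcongr

/-- The hypergeometric ODE. -/
theorem hyp_ode {a b c : ℝ} (ha : ∀ k : ℕ, a + k ≠ 0) (hb : ∀ k : ℕ, b + k ≠ 0)
    (hc : 0 < c) {z : ℝ} (hz : |z| < 1) :
    z * (1 - z) * (a * b / c * ((a+1) * (b+1) / (c+1) * hyp2F1 (a+1+1) (b+1+1) (c+1+1) z))
      + (c - (a + b + 1) * z) * (a * b / c * hyp2F1 (a+1) (b+1) (c+1) z)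
      - a * b * hyp2F1 a b c z = 0 := by
  have s0 := hcf_hasSum ha hb hc hz
  have s1 := hcf_hasSum1 ha hb hc hz
  have s2 := (hcf_hasSum1 (shift_ne ha) (shift_ne hb) (show 0 < c + 1 by linarith) hz).mul_left
    (a*b/c)
  have s2' : HasSum (fun k : ℕ => ((k+1) * (k+2) * hcf a b c (k+2)) * z ^ k)
      (a * b / c * ((a+1) * (b+1) / (c+1) * hyp2F1 (a+1+1) (b+1+1) (c+1+1) z)) := by
    refine s2.congr_fun ?_
    intro k
    have := hcf_shift a b hc (k+1)
    push_cast at this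
    linear_combination (↑k+1) * z ^ k * this
  set F0 := hyp2F1 a b c z
  set F1 := a * b / c * hyp2F1 (a+1) (b+1) (c+1) z
  set F2 := a * b / c * ((a+1) * (b+1) / (c+1) * hyp2F1 (a+1+1) (b+1+1) (c+1+1) z)
  have t1 : HasSum (fun k : ℕ => k * hcf a b c k * z ^ k) (z * F1) := by
    rw [← hasSum_nat_add_iff' 1]
    simp only [Finset.range_one, Finset.sum_singleton, Nat.cast_zero, zero_mul, sub_zero]
    refine (s1.mul_left z).congr_fun fun k => ?_
    push_cast; ring
  have t2 : HasSum (fun k : ℕ => k * (k+1) * hcf a b c (k+1) * z ^ k) (z * F2) := by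
    rw [← hasSum_nat_add_iff' 1]
    simp only [Finset.range_one, Finset.sum_singleton, Nat.cast_zero, zero_mul, sub_zero]
    refine (s2'.mul_left z).congr_fun fun k => ?_
    push_cast; ring
  have t3 : HasSum (fun k : ℕ => k * (k-1) * hcf a b c k * z ^ k) (z * (z * F2)) := by
    rw [← hasSum_nat_add_iff' 1]
    simp only [Finset.range_one, Finset.sum_singleton, Nat.cast_zero, zero_mul, sub_zero]
    refine (t2.mul_left z).congr_fun fun k => ?_
    push_cast; ring
  have tot := (((t2.sub t3).add (s1.mul_left c)).sub (t1.mul_left (a+b+1))).sub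
    (s0.mul_left (a*b))
  have z0 : HasSum (fun _ : ℕ => (0:ℝ)) (z * F2 - z * (z * F2) + c * F1 - (a+b+1) * (z * F1)
      - a * b * F0) := by
    refine tot.congr_fun fun k => ?_
    linear_combination (-z^k) * hcf_rec a b hc k
  have := z0.unique hasSum_zero
  linear_combination this

theorem pos_ne {a : ℝ} (ha : 0 < a) : ∀ k : ℕ, a + k ≠ 0 := fun k => by positivity

theorem neghalf_ne : ∀ k : ℕ, (-(1/2) : ℝ) + k ≠ 0 := by
  intro k h
  have h2 : ((2 * k : ℕ) : ℝ) = (1 : ℕ) := by push_cast; linarith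
  have := Nat.cast_injective h2
  omega

theorem hyp_zero (a b c : ℝ) : hyp2F1 a b c 0 = 1 := by
  unfold hyp2F1
  rw [tsum_eq_single 0]
  · simp [poch]
  · intro k hk; simp [hk]

theorem hyp_pos {a c : ℝ} (ha : 0 < a) (hc : 0 < c) {z : ℝ} (hz0 : 0 ≤ z) (hz : z < 1) :
    0 < hyp2F1 a a c z := by
  have hs := hcf_hasSum (pos_ne ha) (pos_ne ha) hc (z := z) (by rwa [abs_of_nonneg hz0])
  have h1 : ∀ k, 0 ≤ hcf a a c k * z ^ k := fun k => by
    have := poch_pos' ha k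
    have := poch_pos' hc k
    unfold hcf
    positivity
  have := le_hasSum hs 0 (fun k _ => h1 k)
  have e : hcf a a c 0 * z ^ 0 = 1 := by simp [hcf, poch]
  linarith

/-- Euler transformation, in the case needed. -/
theorem euler_transf {c : ℝ} (hc : 0 < c) {z : ℝ} (hz0 : 0 ≤ z) (hz : z < 1) :
    hyp2F1 (c + 1/2) (c + 1/2) c z =
      (1 - z) ^ (-(c+1)) * hyp2F1 (-(1/2)) (-(1/2)) c z := by
  have ha : 0 < c + 1/2 := by linarith
  set a := c + 1/2 with ha_def
  set Y := hyp2F1 a a c with hY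
  set Y1 : ℝ → ℝ := fun z => a * a / c * hyp2F1 (a+1) (a+1) (c+1) z with hY1
  set Y2 : ℝ → ℝ := fun z => a * a / c * ((a+1) * (a+1) / (c+1) * hyp2F1 (a+1+1) (a+1+1) (c+1+1) z)
    with hY2
  set n : ℝ := -(1/2) with hn
  set H := hyp2F1 n n c with hH
  set H1 : ℝ → ℝ := fun z => n * n / c * hyp2F1 (n+1) (n+1) (c+1) z with hH1
  set H2 : ℝ → ℝ := fun z => n * n / c * ((n+1) * (n+1) / (c+1) * hyp2F1 (n+1+1) (n+1+1) (c+1+1) z)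
    with hH2
  have hc1 : 0 < c + 1 := by linarith
  have dY : ∀ x, |x| < 1 → HasDerivAt Y (Y1 x) x := fun x hx =>
    hyp_hasDerivAt (pos_ne ha) (pos_ne ha) hc hx
  have dY1 : ∀ x, |x| < 1 → HasDerivAt Y1 (Y2 x) x := fun x hx =>
    (hyp_hasDerivAt (shift_ne (pos_ne ha)) (shift_ne (pos_ne ha)) hc1 hx).const_mul _
  have dH : ∀ x, |x| < 1 → HasDerivAt H (H1 x) x := fun x hx =>
    hyp_hasDerivAt neghalf_ne neghalf_ne hc hx
  have dH1 : ∀ x, |x| < 1 → HasDerivAt H1 (H2 x) x := fun x hx =>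
    (hyp_hasDerivAt (shift_ne neghalf_ne) (shift_ne neghalf_ne) hc1 hx).const_mul _
  have oY : ∀ x, |x| < 1 → x * (1 - x) * Y2 x + (c - (a + a + 1) * x) * Y1 x - a * a * Y x = 0 :=
    fun x hx => hyp_ode (pos_ne ha) (pos_ne ha) hc hx
  have oH : ∀ x, |x| < 1 → x * (1 - x) * H2 x + (c - (n + n + 1) * x) * H1 x - n * n * H x = 0 :=
    fun x hx => hyp_ode neghalf_ne neghalf_ne hc hx
  have Ypos : ∀ x, 0 ≤ x → x < 1 → 0 < Y x := fun x h0 h1 => hyp_pos ha hc h0 h1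
  have Y0 : Y 0 = 1 := hyp_zero _ _ _
  have H0 : H 0 = 1 := hyp_zero _ _ _
  clear_value Y Y1 Y2 H H1 H2
  set q : ℝ → ℝ := fun x => (1 - x) * (Y x * H1 x - Y1 x * H x) + (c+1) * (Y x * H x) with hq
  have dq : ∀ x, |x| < 1 → HasDerivAt q (-(Y x * H1 x - Y1 x * H x) +
      (1 - x) * (Y x * H2 x - Y2 x * H x) + (c+1) * (Y1 x * H x + Y x * H1 x)) x := by
    intro x hx
    have h1 := ((hasDerivAt_id x).const_sub 1).mul
      (((dY x hx).mul (dH1 x hx)).sub ((dY1 x hx).mul (dH x hx)))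
    have h2 := (((dY x hx).mul (dH x hx))).const_mul (c+1)
    have h3 := h1.add h2
    refine h3.congr_deriv ?_
    simp only [id, Pi.mul_apply, Pi.sub_apply]
    ring
  have qode : ∀ x, |x| < 1 → c * q x + x * (-(Y x * H1 x - Y1 x * H x) +
      (1 - x) * (Y x * H2 x - Y2 x * H x) + (c+1) * (Y1 x * H x + Y x * H1 x)) = 0 := by
    intro x hx
    have e1 := oY x hx
    have e2 := oH x hx
    simp only [hq]
    rw [hn] at e2
    rw [ha_def] at e1
    linear_combination Y x * e2 - H x * e1
  have habs : ∀ x : ℝ, 0 ≤ x → x < 1 → |x| < 1 := fun x h0 h1 => by rwa [abs_of_nonneg h0]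
  have q0 : ∀ x, 0 < x → x < 1 → q x = 0 := by
    intro x hx0 hx1
    have R := exists_hasDerivAt_eq_slope (fun x => x ^ c * q x) (fun _ => 0) hx0 ?_ ?_
    · obtain ⟨ξ, hξ, e⟩ := R
      simp only [Real.zero_rpow hc.ne', zero_mul, sub_zero] at e
      have h1 : x ^ c * q x = 0 := by
        have := e.symm
        rwa [div_eq_zero_iff, or_iff_left hx0.ne'] at this
      exact (mul_eq_zero.1 h1).resolve_left (Real.rpow_pos_of_pos hx0 c).ne'
    · intro y hy
      have := (dq y (habs y hy.1 (lt_of_le_of_lt hy.2 hx1))).continuousAt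
      exact ((Real.continuousAt_rpow_const y c (Or.inr hc.le)).mul this).continuousWithinAt
    · intro y hy
      have hy' := habs y hy.1.le (hy.2.trans hx1)
      have h1 := (Real.hasDerivAt_rpow_const (x := y) (p := c) (Or.inl hy.1.ne')).mul (dq y hy')
      refine h1.congr_deriv ?_
      have e := qode y hy'
      rw [Real.rpow_sub_one hy.1.ne']
      have := hy.1.ne'
      field_simp
      linear_combination y ^ c * e
  rcases hz0.eq_or_lt with rfl | hzpos
  · simp [Y0, H0]
  have R := exists_hasDerivAt_eq_slope (fun x => (1 - x) ^ (-(c+1)) * H x / Y x) (fun _ => 0) hzpos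
    ?_ ?_
  · obtain ⟨ξ, hξ, e⟩ := R
    have := e.symm
    rw [div_eq_zero_iff, or_iff_left (by linarith)] at this
    have hy := (Ypos z hz0 hz).ne'
    simp only [Y0, H0, sub_zero, Real.one_rpow, mul_one, div_one] at this
    have h2 : (1 - z) ^ (-(c+1)) * H z / Y z = 1 := by linarith
    rw [div_eq_one_iff_eq hy] at h2
    exact h2.symm
  · intro y hy
    have hy1 : y < 1 := lt_of_le_of_lt hy.2 hz
    have hy' := habs y hy.1 hy1
    have h1 : ContinuousAt (fun x : ℝ => (1 - x) ^ (-(c+1))) y :=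
      ContinuousAt.rpow_const (by fun_prop) (Or.inl (by linarith))
    exact ((h1.mul (dH y hy').continuousAt).div (dY y hy').continuousAt
      (Ypos y hy.1 hy1).ne').continuousWithinAt
  · intro y hy
    have hy1 : y < 1 := hy.2.trans hz
    have hy' := habs y hy.1.le hy1
    have h1 : HasDerivAt (fun x : ℝ => (1 - x) ^ (-(c+1))) _ y :=
      ((hasDerivAt_id y).const_sub 1).rpow_const (p := -(c+1)) (Or.inl (by simp; linarith))
    have h2 := (h1.mul (dH y hy')).div (dY y hy') (Ypos y hy.1.le hy1).ne'
    refine h2.congr_deriv ?_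
    have e := q0 y hy.1 hy1
    have hyne := (Ypos y hy.1.le hy1).ne'
    have h1y : 1 - y ≠ 0 := by linarith
    simp only [id, Pi.mul_apply]
    rw [Real.rpow_sub_one h1y]
    simp only [hq] at e
    field_simp
    linear_combination (1 - y) ^ (-(c+1)) * e

open ProbabilityTheory in
theorem lint_beta {α β : ℝ} (hα : 0 < α) (hβ : 0 < β) :
    ∫⁻ x in Set.Ioo (0:ℝ) 1, ENNReal.ofReal (x ^ (α-1) * (1-x) ^ (β-1)) =
      ENNReal.ofReal (beta α β) := by
  have hb := beta_pos hα hβ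
  have h := lintegral_betaPDF_eq_one hα hβ
  rw [lintegral_betaPDF] at h
  simp_rw [mul_assoc, ENNReal.ofReal_mul (one_div_nonneg.2 hb.le)] at h
  rw [lintegral_const_mul _ (by fun_prop)] at h
  rw [one_div, ENNReal.ofReal_inv_of_pos hb] at h
  have h0 : ENNReal.ofReal (beta α β) ≠ 0 := by simpa using hb
  have h1 : ENNReal.ofReal (beta α β) ≠ ⊤ := ENNReal.ofReal_ne_top
  calc _ = ENNReal.ofReal (beta α β) * ((ENNReal.ofReal (beta α β))⁻¹ *
        ∫⁻ x in Set.Ioo (0:ℝ) 1, ENNReal.ofReal (x ^ (α-1) * (1-x) ^ (β-1))) := by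
          rw [← mul_assoc, ENNReal.mul_inv_cancel h0 h1, one_mul]
    _ = _ := by rw [h, mul_one]

theorem poch_eq_asc (a : ℝ) (k : ℕ) : (ascPochhammer ℕ k).smeval a = poch a k := by
  rw [Polynomial.ascPochhammer_smeval_eq_eval]
  induction k with
  | zero => simp [poch]
  | succ k ih => rw [ascPochhammer_succ_eval, ih, poch_succ']

theorem binom_hasSum (a : ℝ) {t : ℝ} (ht : |t| < 1) :
    HasSum (fun k : ℕ => poch a k / (Nat.factorial k : ℝ) * t ^ k) ((1 - t) ^ (-a)) := by
  have h := (Real.one_div_one_sub_rpow_hasFPowerSeriesOnBall_zero a).hasSum (y := t) (by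
    simpa [enorm_eq_nnnorm, ← NNReal.coe_lt_coe] using ht)
  have hpos : 0 ≤ 1 - t := by linarith [le_abs_self t]
  rw [zero_add, one_div, ← Real.rpow_neg hpos] at h
  refine h.congr_fun fun k => ?_
  rw [FormalMultilinearSeries.ofScalars_apply_eq, ← Ring.multichoose_eq, ← poch_eq_asc,
    ← Ring.factorial_nsmul_multichoose_eq_ascPochhammer, nsmul_eq_mul, smul_eq_mul]
  have h1 : (Nat.factorial k : ℝ) ≠ 0 := by positivity
  field_simp

theorem Gamma_poch {a : ℝ} (ha : 0 < a) (k : ℕ) : Real.Gamma (a + k) = poch a k * Real.Gamma a := by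
  induction k with
  | zero => simp [poch]
  | succ k ih =>
    push_cast
    rw [← add_assoc, Real.Gamma_add_one (by positivity), ih, poch_succ']; ring

/-- Gauss summation, in the case needed. -/
theorem gauss_sum {c : ℝ} (hc : 0 < c) :
    HasSum (hcf (1/2) (1/2) (c+1))
      (Real.Gamma (c+1) * Real.Gamma c / Real.Gamma (c + 1/2) ^ 2) := by
  have hch : 0 < c + 1/2 := by linarith
  have hc1 : 0 < c + 1 := by linarith
  have g1 := Real.Gamma_pos_of_pos hc
  have g2 := Real.Gamma_pos_of_pos hch
  have g3 := Real.Gamma_pos_of_pos hc1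
  have g4 := Real.Gamma_pos_of_pos (show (0:ℝ) < 1/2 by norm_num)
  have A : ∫⁻ t in Set.Ioo (0:ℝ) 1, ∑' k : ℕ, ENNReal.ofReal (poch (1/2) k / (Nat.factorial k : ℝ)) *
      ENNReal.ofReal (t ^ ((1/2 + k : ℝ) - 1) * (1 - t) ^ ((c + 1/2) - 1)) =
      ENNReal.ofReal (ProbabilityTheory.beta (1/2) c) := by
    rw [← lint_beta (by norm_num) hc]
    apply setLIntegral_congr_fun measurableSet_Ioo
    intro t ht
    have ht1 : 0 < 1 - t := by linarith [ht.2]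
    have hb := (binom_hasSum (1/2) (t := t) (by rw [abs_of_pos ht.1]; exact ht.2)).mul_right
      (t ^ ((1/2:ℝ) - 1) * (1 - t) ^ ((c + 1/2) - 1))
    have e1 : (1 - t) ^ (-(1/2:ℝ)) * (t ^ ((1/2:ℝ) - 1) * (1 - t) ^ ((c + 1/2) - 1)) =
        t ^ ((1/2:ℝ) - 1) * (1 - t) ^ (c - 1) := by
      rw [mul_left_comm, ← Real.rpow_add ht1]
      congr 2
      ring
    rw [e1] at hb
    have hp : ∀ k, 0 ≤ poch (1/2) k / (Nat.factorial k : ℝ) := fun k => by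
      have := poch_pos' (show (0:ℝ) < 1/2 by norm_num) k
      positivity
    simp only
    rw [← hb.tsum_eq, ENNReal.ofReal_tsum_of_nonneg _ hb.summable]
    · congr 1
      ext k
      rw [← ENNReal.ofReal_mul (hp k)]
      congr 1
      rw [show ((1/2 + k : ℝ) - 1) = (1/2 - 1) + k by ring, Real.rpow_add_natCast ht.1.ne']
      ring
    · intro k
      have := hp k
      have := Real.rpow_nonneg ht.1.le (1/2-1)
      have := Real.rpow_nonneg ht1.le (c+1/2-1)
      have := pow_nonneg ht.1.le k
      positivity
  rw [lintegral_tsum (fun k => by fun_prop)] at A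
  have hterm : ∀ k : ℕ, ∫⁻ t in Set.Ioo (0:ℝ) 1, ENNReal.ofReal (poch (1/2) k / (Nat.factorial k : ℝ)) *
      ENNReal.ofReal (t ^ ((1/2 + k : ℝ) - 1) * (1 - t) ^ ((c + 1/2) - 1)) =
      ENNReal.ofReal (hcf (1/2) (1/2) (c+1) k * 
        (Real.Gamma (1/2) * Real.Gamma (c+1/2) / Real.Gamma (c+1))) := by
    intro k
    have := poch_pos' (show (0:ℝ) < 1/2 by norm_num) k
    have := poch_pos' hc1 k
    rw [lintegral_const_mul _ (by fun_prop), lint_beta (by positivity) hch,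
      ← ENNReal.ofReal_mul (by positivity)]
    congr 1
    unfold ProbabilityTheory.beta hcf
    rw [show (1/2 + k + (c + 1/2) : ℝ) = (c+1) + k by ring, Gamma_poch hc1,
      Gamma_poch (by norm_num)]
    field_simp
  simp_rw [hterm] at A
  have hp : ∀ k, 0 ≤ hcf (1/2) (1/2) (c+1) k * 
        (Real.Gamma (1/2) * Real.Gamma (c+1/2) / Real.Gamma (c+1)) := by
    intro k
    have := poch_pos' (show (0:ℝ) < 1/2 by norm_num) k
    have := poch_pos' hc1 k
    unfold hcf
    positivity
  have B : HasSum (fun k => hcf (1/2) (1/2) (c+1) k * 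
        (Real.Gamma (1/2) * Real.Gamma (c+1/2) / Real.Gamma (c+1)))
        (ProbabilityTheory.beta (1/2) c) := by
    have hb := ProbabilityTheory.beta_pos (show (0:ℝ) < 1/2 by norm_num) hc
    have h1 := ENNReal.hasSum_toReal (f := fun k => ENNReal.ofReal (hcf (1/2) (1/2) (c+1) k * 
        (Real.Gamma (1/2) * Real.Gamma (c+1/2) / Real.Gamma (c+1)))) (by
          rw [A]; exact ENNReal.ofReal_ne_top)
    rw [← ENNReal.tsum_toReal_eq (fun _ => ENNReal.ofReal_ne_top), A, ENNReal.toReal_ofReal hb.le]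
      at h1
    refine h1.congr_fun fun k => ?_
    rw [ENNReal.toReal_ofReal (hp k)]
  have B2 := B.mul_right (Real.Gamma (1/2) * Real.Gamma (c+1/2) / Real.Gamma (c+1))⁻¹
  have e : ProbabilityTheory.beta (1/2) c *
      (Real.Gamma (1/2) * Real.Gamma (c+1/2) / Real.Gamma (c+1))⁻¹ =
      Real.Gamma (c+1) * Real.Gamma c / Real.Gamma (c + 1/2) ^ 2 := by
    unfold ProbabilityTheory.beta
    rw [show (1/2 + c : ℝ) = c + 1/2 by ring]
    field_simp
  rw [e] at B2
  refine B2.congr_fun fun k => ?_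
  rw [mul_assoc, mul_inv_cancel₀ (by positivity), mul_one]

/-- `H(z) = ₂F₁(-1/2,-1/2;c;z)` converges as `z ↑ 1`. -/
theorem H_tendsto {c : ℝ} (hc : 0 < c) :
    ∃ l, Tendsto (hyp2F1 (-(1/2)) (-(1/2)) c) (nhdsWithin 1 (Set.Iio 1)) (nhds l) := by
  have hg := (gauss_sum hc).summable.norm.mul_left ((1/4) / c)
  have hs : Summable (hcf (-(1/2)) (-(1/2)) c) := by
    rw [← summable_nat_add_iff 1]
    refine Summable.of_norm_bounded hg fun k => ?_
    have e := hcf_shift (-(1/2)) (-(1/2)) hc k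
    norm_num at e
    have h1 : ‖((k:ℝ)+1) * hcf (-(1/2)) (-(1/2)) c (k+1)‖ =
        1/4/c * ‖hcf (1/2) (1/2) (c+1) k‖ := by
      norm_num
      rw [show (-(1/2):ℝ) = -1/2 by norm_num] 
      rw [show (-(1/2):ℝ) = -1/2 by norm_num] at e
      rw [← abs_mul, e, abs_mul, abs_of_pos (by positivity)]
    rw [← h1, norm_mul]
    have : (1:ℝ) ≤ ‖(k:ℝ)+1‖ := by
      rw [Real.norm_eq_abs, abs_of_pos (by positivity)]; linarith [Nat.cast_nonneg (α := ℝ) k]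
    nlinarith [norm_nonneg (hcf (-(1/2)) (-(1/2)) c (k+1))]
  exact ⟨_, Real.tendsto_tsum_powerSeries_nhdsWithin_lt hs.hasSum.tendsto_sum_nat⟩

theorem H1_tendsto {c : ℝ} (hc : 0 < c) :
    Tendsto (hyp2F1 (-(1/2)+1) (-(1/2)+1) (c+1)) (nhdsWithin 1 (Set.Iio 1))
      (nhds (Real.Gamma (c+1) * Real.Gamma c / Real.Gamma (c + 1/2) ^ 2)) := by
  rw [show (-(1/2)+1 : ℝ) = 1/2 by norm_num]
  exact Real.tendsto_tsum_powerSeries_nhdsWithin_lt (gauss_sum hc).tendsto_sum_nat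

theorem twoPt_right {δ : ℝ} (hδ : 0 < δ) {s r : ℝ} (hs : 0 < s) (hsr : s < r) (hr : r < 1) :
    twoPt δ s r = Kcoef δ * ((s * (1 - r) * (r * (1 - s))) ^ ((1:ℝ)/2) *
      hyp2F1 (-(1/2)) (-(1/2)) (δ/2) (s * (1 - r) / (r * (1 - s)))) := by
  have hu : 0 < s * (1 - r) := mul_pos hs (by linarith)
  have hv : 0 < r * (1 - s) := mul_pos (by linarith) (by linarith)
  have hd : 0 < r - s := by linarith
  have hz0 : 0 ≤ s * (1 - r) / (r * (1 - s)) := by positivity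
  have hz1 : s * (1 - r) / (r * (1 - s)) < 1 := by
    rw [div_lt_one hv]; nlinarith
  have e1 : 1 - s * (1 - r) / (r * (1 - s)) = (r - s) / (r * (1 - s)) := by
    rw [eq_div_iff hv.ne', sub_mul, div_mul_cancel₀ _ hv.ne']; ring
  have E := euler_transf (show 0 < δ/2 by linarith) hz0 hz1
  rw [e1] at E
  rw [twoPt, if_pos hsr, show (δ+1)/2 = δ/2 + 1/2 by ring, E, Real.div_rpow hd.le hv.le,
    Real.mul_rpow hu.le hv.le]
  have p1 : (r - s) ^ (δ/2+1) * (r - s) ^ (-(δ/2+1)) = 1 := by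
    rw [← Real.rpow_add hd]; simp
  have p2 : (r * (1 - s)) ^ (-(δ/2+1/2)) =
      (r * (1 - s)) ^ (-(δ/2+1)) * (r * (1 - s)) ^ ((1:ℝ)/2) := by
    rw [← Real.rpow_add hv]; congr 1; ring
  have p3 := (Real.rpow_pos_of_pos hv (-(δ/2+1))).ne'
  rw [p2]
  have p4 : (r - s) ^ (δ/2+1) * ((r - s) ^ (-(δ/2+1)) / (r * (1 - s)) ^ (-(δ/2+1))) *
     (r * (1 - s)) ^ (-(δ/2+1)) = 1 := by
    rw [mul_assoc, div_mul_cancel₀ _ p3, p1]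
  linear_combination (Kcoef δ * ((s * (1 - r)) ^ ((1:ℝ)/2) * (r * (1 - s)) ^ ((1:ℝ)/2) *
      hyp2F1 (-(1/2)) (-(1/2)) (δ/2) (s * (1 - r) / (r * (1 - s))))) * p4

theorem twoPt_refl {δ s r : ℝ} (h : r < s) : twoPt δ s r = twoPt δ (1 - s) (1 - r) := by
  rw [twoPt, if_neg (by linarith), twoPt, if_pos (by linarith)]
  rw [show 1 - r - (1 - s) = s - r by ring, show (1 - s) * (1 - (1 - r)) = r * (1 - s) by ring,
    show (1 - r) * (1 - (1 - s)) = s * (1 - r) by ring]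

/-- The right limit. -/
theorem right_lim {δ : ℝ} (hδ : 0 < δ) {l : ℝ}
    (hl : Tendsto (hyp2F1 (-(1/2)) (-(1/2)) (δ/2)) (nhdsWithin 1 (Set.Iio 1)) (nhds l))
    {s : ℝ} (hs : s ∈ Set.Ioo (0 : ℝ) 1) :
    Tendsto (fun r => deriv (fun r => twoPt δ s r) r) (nhdsWithin s (Set.Ioo s 1))
      (nhds (Kcoef δ * ((1 - 2 * s) / 2 * l) - 1 / 2)) := by
  obtain ⟨hs0, hs1⟩ := hs
  have hc : 0 < δ/2 := by linarith
  set H := hyp2F1 (-(1/2)) (-(1/2)) (δ/2) with hH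
  set M := hyp2F1 (-(1/2)+1) (-(1/2)+1) (δ/2+1) with hM
  set z : ℝ → ℝ := fun r => s * (1 - r) / (r * (1 - s)) with hz
  set P : ℝ → ℝ := fun r => s * (1 - r) * (r * (1 - s)) with hP
  have hder : ∀ r ∈ Set.Ioo s 1, deriv (fun r => twoPt δ s r) r =
      Kcoef δ * ((s * (1 - s) * (1 - 2 * r)) * (1/2) * P r ^ ((1:ℝ)/2 - 1) * H (z r) +
        P r ^ ((1:ℝ)/2) * (1 / (2 * δ) * M (z r) * (- s / (r^2 * (1 - s))))) := by
    rintro r ⟨h1, h2⟩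
    have hr0 : 0 < r := by linarith
    have hu : 0 < s * (1 - r) := mul_pos hs0 (by linarith)
    have hv : 0 < r * (1 - s) := mul_pos (by linarith) (by linarith)
    have hz0 : 0 ≤ z r := by positivity
    have hz1 : z r < 1 := by
      simp only [hz]
      rw [div_lt_one hv]; nlinarith
    have ev : (fun r => twoPt δ s r) =ᶠ[nhds r]
        fun r => Kcoef δ * (P r ^ ((1:ℝ)/2) * H (z r)) := by
      filter_upwards [isOpen_Ioo.mem_nhds (show r ∈ Set.Ioo s 1 from ⟨h1, h2⟩)] with x hx
      exact twoPt_right hδ hs0 hx.1 hx.2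
    rw [ev.deriv_eq]
    apply HasDerivAt.deriv
    have dz : HasDerivAt z (- s / (r^2 * (1 - s))) r := by
      have a1 := ((hasDerivAt_id r).const_sub 1).const_mul s
      have a2 := (hasDerivAt_id r).mul_const (1 - s)
      refine (a1.div a2 hv.ne').congr_deriv ?_
      have : 1 - s ≠ 0 := by linarith
      simp only [id]
      field_simp
      try ring
    have dP : HasDerivAt P (s * (1 - s) * (1 - 2 * r)) r := by
      have a1 := ((hasDerivAt_id r).const_sub 1).const_mul s
      have a2 := (hasDerivAt_id r).mul_const (1 - s)
      refine (a1.mul a2).congr_deriv ?_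
      simp only [id]
      ring
    have dH : HasDerivAt H (1 / (2 * δ) * M (z r)) (z r) := by
      refine (hyp_hasDerivAt neghalf_ne neghalf_ne hc (z := z r)
        (by rwa [abs_of_nonneg hz0])).congr_deriv ?_
      rw [hM]
      congr 1
      field_simp
      try norm_num
    have dPp := dP.rpow_const (p := (1:ℝ)/2) (Or.inl (mul_pos hu hv).ne')
    exact (dPp.mul (dH.comp r dz)).const_mul _
  have hev : (fun r => Kcoef δ * ((s * (1 - s) * (1 - 2 * r)) * (1/2) * P r ^ ((1:ℝ)/2 - 1) * H (z r) +
        P r ^ ((1:ℝ)/2) * (1 / (2 * δ) * M (z r) * (- s / (r^2 * (1 - s))))))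
      =ᶠ[nhdsWithin s (Set.Ioo s 1)] (fun r => deriv (fun r => twoPt δ s r) r) := by
    filter_upwards [self_mem_nhdsWithin] with r hr
    exact (hder r hr).symm
  refine Tendsto.congr' hev ?_
  have h1s : 0 < 1 - s := by linarith
  have zs : z s = 1 := by
    simp only [hz]; exact div_self (by positivity)
  have tz : Tendsto z (nhdsWithin s (Set.Ioo s 1)) (nhdsWithin 1 (Set.Iio 1)) := by
    refine tendsto_nhdsWithin_of_tendsto_nhds_of_eventually_within _ ?_ ?_
    · have : ContinuousAt z s := by
        refine ContinuousAt.div (by fun_prop) (by fun_prop) (by positivity)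
      have t := this.tendsto
      rw [zs] at t
      exact t.mono_left nhdsWithin_le_nhds
    · filter_upwards [self_mem_nhdsWithin] with r hr
      have hv : 0 < r * (1 - s) := mul_pos (by linarith [hr.1]) (by linarith)
      simp only [hz, Set.mem_Iio]
      rw [div_lt_one hv]; nlinarith [hr.1]
  have Ps : P s = (s * (1 - s)) ^ 2 := by simp only [hP]; ring
  have hp : 0 < s * (1 - s) := by positivity
  have tP : Tendsto P (nhdsWithin s (Set.Ioo s 1)) (nhds ((s * (1 - s)) ^ 2)) := by
    rw [← Ps]
    exact (show ContinuousAt P s by fun_prop).tendsto.mono_left nhdsWithin_le_nhds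
  have pw : ((s * (1 - s)) ^ 2) ^ ((1:ℝ)/2) = s * (1 - s) := by
    rw [← Real.sqrt_eq_rpow, Real.sqrt_sq hp.le]
  have tP1 := tP.rpow_const (p := (1:ℝ)/2) (Or.inl (by positivity))
  have tP2 := tP.rpow_const (p := (1:ℝ)/2 - 1) (Or.inl (by positivity))
  rw [Real.rpow_sub_one (by positivity), pw] at tP2
  rw [pw] at tP1
  have tid : Tendsto (fun r : ℝ => r) (nhdsWithin s (Set.Ioo s 1)) (nhds s) :=
    tendsto_id.mono_left nhdsWithin_le_nhds
  have t3 : Tendsto (fun r : ℝ => s * (1 - s) * (1 - 2 * r)) (nhdsWithin s (Set.Ioo s 1))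
      (nhds (s * (1 - s) * (1 - 2 * s))) := ((tid.const_mul 2).const_sub 1).const_mul _
  have t4 : Tendsto (fun r : ℝ => - s / (r^2 * (1 - s))) (nhdsWithin s (Set.Ioo s 1))
      (nhds (- s / (s^2 * (1 - s)))) :=
    tendsto_const_nhds.div ((tid.pow 2).mul_const _) (by positivity)
  have tot := ((((t3.mul_const (1/2)).mul tP2).mul (hl.comp tz)).add
    (tP1.mul ((((H1_tendsto hc).comp tz).const_mul (1 / (2 * δ))).mul t4))).const_mul (Kcoef δ)
  have e : Kcoef δ * ((1 - 2 * s) / 2 * l) - 1 / 2 =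
      Kcoef δ * (s * (1 - s) * (1 - 2 * s) * (1 / 2) * (s * (1 - s) / (s * (1 - s)) ^ 2) * l +
      s * (1 - s) * (1 / (2 * δ) * (Real.Gamma (δ/2+1) * Real.Gamma (δ/2) /
        Real.Gamma (δ/2 + 1/2) ^ 2) * (- s / (s^2 * (1 - s))))) := by
    rw [Real.Gamma_add_one hc.ne', Kcoef, show (δ+1)/2 = δ/2 + 1/2 by ring]
    have g1 := (Real.Gamma_pos_of_pos hc).ne'
    have g2 := (Real.Gamma_pos_of_pos (show 0 < δ/2 + 1/2 by linarith)).ne'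
    have := h1s.ne'
    have := hs0.ne'
    field_simp
    ring
  rw [e]
  exact tot

theorem twoPt_deriv_jump (δ : ℝ) (hδ : 0 < δ) (s : ℝ) (hs : s ∈ Set.Ioo (0 : ℝ) 1) :
    ∃ Lplus Lminus : ℝ,
      Tendsto (fun r => deriv (fun r => twoPt δ s r) r)
        (nhdsWithin s (Set.Ioo s 1)) (nhds Lplus) ∧
      Tendsto (fun r => deriv (fun r => twoPt δ s r) r)
        (nhdsWithin s (Set.Ioo 0 s)) (nhds Lminus) ∧
      Lplus - Lminus = -1 := by
  obtain ⟨l, hl⟩ := H_tendsto (show 0 < δ/2 by linarith)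
  have hs' : 1 - s ∈ Set.Ioo (0:ℝ) 1 := ⟨by linarith [hs.2], by linarith [hs.1]⟩
  have R := right_lim hδ hl hs
  have L := right_lim hδ hl hs'
  refine ⟨_, -(Kcoef δ * ((1 - 2 * (1 - s)) / 2 * l) - 1 / 2), R, ?_, by ring⟩
  have tr : Tendsto (fun r : ℝ => 1 - r) (nhdsWithin s (Set.Ioo 0 s))
      (nhdsWithin (1 - s) (Set.Ioo (1 - s) 1)) := by
    refine tendsto_nhdsWithin_of_tendsto_nhds_of_eventually_within _ ?_ ?_
    · exact (show ContinuousAt (fun r : ℝ => 1 - r) s by fun_prop).tendsto.mono_left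
        nhdsWithin_le_nhds
    · filter_upwards [self_mem_nhdsWithin] with r hr
      exact ⟨by linarith [hr.2], by linarith [hr.1]⟩
  refine Tendsto.congr' ?_ (L.comp tr).neg
  filter_upwards [self_mem_nhdsWithin] with r hr
  have ev : (fun r => twoPt δ s r) =ᶠ[nhds r] fun r => twoPt δ (1 - s) (1 - r) := by
    filter_upwards [isOpen_Ioo.mem_nhds hr] with x hx
    exact twoPt_refl hx.2
  rw [ev.deriv_eq]
  simp only [Function.comp]
  rw [deriv_comp_const_sub (fun r => twoPt δ (1 - s) r)]
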